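/- arXiv:2112.06659 — 5 statements merged into one kernel-verified Lean document; each statement's English description precedes it below -/
import Mathlib

section
/- Let F be a union-closed family on n elements with m sets. If H(F) ≤ 3 or H(F) ≥ n − 1, then there exists an element x ∈ {1, …, n} that belongs to more than m/2 of the sets of F. -/
open Finset

/-- The minimal members of a family of finite sets: those `A` such that no
member `B ≠ A` satisfies `B ⊆ A`. -/
def minimalSets (G : Finset (Finset ℕ)) : Finset (Finset ℕ) :=
  G.filter fun A => ∀ B ∈ G, B ≠ A → ¬ B ⊆ A

/-- The family remaining after removing the first `i` layers of the height
decomposition. -/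
def rest (F : Finset (Finset ℕ)) : ℕ → Finset (Finset ℕ)
  | 0 => F
  | i + 1 => rest F i \ minimalSets (rest F i)

/-- The `i`-th layer `π_i` of the height decomposition (meaningful for `i ≥ 1`):
`π_{i+1}` is the family of minimal members of `F \ (π₁ ∪ ⋯ ∪ π_i)`. -/
def layer (F : Finset (Finset ℕ)) : ℕ → Finset (Finset ℕ)
  | 0 => ∅
  | i + 1 => minimalSets (rest F i)

/-- The height number `H(F)`: the least `H` with `F = π₁ ∪ ⋯ ∪ π_H`,
equivalently the least `H` with `rest F H = ∅`. -/
noncomputable def height (F : Finset (Finset ℕ)) : ℕ :=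
  sInf {H : ℕ | rest F H = ∅}

/-- `F` is a union-closed family on `n` elements with `m` sets: a finite family
of `m` distinct nonempty finite sets whose union is `{1, …, n}`, closed under
unions. -/
def IsUC (F : Finset (Finset ℕ)) (n m : ℕ) : Prop :=
  F.Nonempty ∧ F.card = m ∧ (∀ A ∈ F, A.Nonempty) ∧
    F.sup id = Finset.Icc 1 n ∧ ∀ A ∈ F, ∀ B ∈ F, A ∪ B ∈ F

/-- The tent `T(A)` of a set `A` of level `i ≥ 2`: the family
`{A} ∪ {B ∈ π_{i−1} : B ⊆ A}`. -/
def tent (F : Finset (Finset ℕ)) (i : ℕ) (A : Finset ℕ) : Finset (Finset ℕ) :=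
  insert A ((layer F (i - 1)).filter fun B => B ⊆ A)

/-- `F` is separating: every pair of distinct elements of `{1, …, n}` is
separated by some member of `F`. -/
def Separating (F : Finset (Finset ℕ)) (n : ℕ) : Prop :=
  ∀ x ∈ Finset.Icc 1 n, ∀ y ∈ Finset.Icc 1 n, x ≠ y →
    ∃ A ∈ F, (x ∈ A ∧ y ∉ A) ∨ (y ∈ A ∧ x ∉ A)

lemma rest_succ_mem {F : Finset (Finset ℕ)} {i : ℕ} {A : Finset ℕ} :
    A ∈ rest F (i + 1) ↔ A ∈ rest F i ∧ ∃ B ∈ rest F i, B ⊂ A := by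
  simp only [rest, minimalSets, Finset.mem_sdiff, Finset.mem_filter, not_and, not_forall, not_not]
  constructor
  · rintro ⟨h1, h2⟩
    obtain ⟨B, hB, hne, hs⟩ := h2 h1
    exact ⟨h1, B, hB, hs.ssubset_of_ne hne⟩
  · rintro ⟨h1, B, hB, hs⟩
    exact ⟨h1, fun _ => ⟨B, hB, hs.ne, hs.subset⟩⟩

lemma rest_card {F : Finset (Finset ℕ)} {k : ℕ} (hk : ∀ A ∈ F, k ≤ A.card) (i : ℕ) :
    ∀ A ∈ rest F i, k + i ≤ A.card := by
  induction i with
  | zero => simpa [rest] using hk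
  | succ i ih =>
    intro A hA
    obtain ⟨_, B, hB, hs⟩ := rest_succ_mem.1 hA
    have := ih B hB
    have := Finset.card_lt_card hs
    omega

lemma rest_sub {F : Finset (Finset ℕ)} (i : ℕ) : ∀ A ∈ rest F i, A ∈ F := by
  induction i with
  | zero => simp [rest]
  | succ i ih => exact fun A hA => ih A (rest_succ_mem.1 hA).1

lemma rest_mono {F : Finset (Finset ℕ)} {i j : ℕ} (h : i ≤ j) : rest F j ⊆ rest F i := by
  induction h with
  | refl => exact subset_rfl
  | step _ ih => exact fun A hA => ih (rest_succ_mem.1 hA).1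

lemma rest_up {F : Finset (Finset ℕ)} (i : ℕ) :
    ∀ A ∈ rest F i, ∀ B ∈ F, A ⊆ B → B ∈ rest F i := by
  induction i with
  | zero => intro A _ B hB _; simpa [rest] using hB
  | succ i ih =>
    intro A hA B hB hAB
    obtain ⟨h1, C, hC, hs⟩ := rest_succ_mem.1 hA
    exact rest_succ_mem.2 ⟨ih A h1 B hB hAB, C, hC, hs.trans_subset hAB⟩

lemma rest_step {F : Finset (Finset ℕ)} {i : ℕ} {A B : Finset ℕ} (hA : A ∈ rest F i)
    (hB : B ∈ F) (h : A ⊂ B) : B ∈ rest F (i + 1) :=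
  rest_succ_mem.2 ⟨rest_up i A hA B hB h.subset, A, hA, h⟩

/-- A family with a member of at most two elements satisfies the claim. -/
lemma small_case {F : Finset (Finset ℕ)} (hU : ∀ A ∈ F, ∀ B ∈ F, A ∪ B ∈ F)
    (hne : ∀ A ∈ F, A.Nonempty) {S : Finset ℕ} (hS : S ∈ F) (hc : S.card ≤ 2) :
    ∃ x ∈ S, 2 * (F.filter fun A => x ∈ A).card > F.card := by
  obtain ⟨a, b, rfl⟩ : ∃ a b, S = {a, b} := by
    have h0 := (hne S hS).card_pos
    obtain h | h : S.card = 1 ∨ S.card = 2 := by omega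
    · obtain ⟨a, rfl⟩ := Finset.card_eq_one.1 h
      exact ⟨a, a, by simp⟩
    · obtain ⟨a, b, _, rfl⟩ := Finset.card_eq_two.1 h
      exact ⟨a, b, rfl⟩
  have key : (F.filter fun A => a ∉ A ∧ b ∉ A).card < (F.filter fun A => a ∈ A ∧ b ∈ A).card := by
    have h1 : ((F.filter fun A => a ∉ A ∧ b ∉ A).image fun A => A ∪ {a, b}) ⊂
        (F.filter fun A => a ∈ A ∧ b ∈ A) := by
      rw [Finset.ssubset_iff_of_subset]
      · refine ⟨{a, b}, by simp [hS], ?_⟩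
        simp only [Finset.mem_image, Finset.mem_filter, not_exists, not_and]
        rintro A ⟨hA, ha, hb⟩ h
        obtain ⟨x, hx⟩ := hne A hA
        have : x ∈ ({a, b} : Finset ℕ) := h ▸ Finset.mem_union_left _ hx
        simp only [Finset.mem_insert, Finset.mem_singleton] at this
        rcases this with rfl | rfl <;> contradiction
      · intro B hB
        simp only [Finset.mem_image, Finset.mem_filter] at hB ⊢
        obtain ⟨A, ⟨hA, -⟩, rfl⟩ := hB
        exact ⟨hU _ hA _ hS, by simp, by simp⟩
    refine lt_of_eq_of_lt ?_ (Finset.card_lt_card h1)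
    rw [Finset.card_image_of_injOn]
    intro A hA B hB h
    simp only [Finset.coe_filter, Set.mem_setOf_eq] at hA hB
    ext x
    have hx : x ∈ A ∪ {a, b} ↔ x ∈ B ∪ {a, b} := by
      have h' : A ∪ {a, b} = B ∪ {a, b} := h
      rw [h']
    simp only [Finset.mem_union, Finset.mem_insert, Finset.mem_singleton] at hx
    by_cases h1 : x = a
    · subst h1; tauto
    by_cases h2 : x = b
    · subst h2; tauto
    tauto
  have e1 : (F.filter fun A => a ∈ A).card + (F.filter fun A => b ∈ A).card =
      (F.filter fun A => a ∈ A ∨ b ∈ A).card + (F.filter fun A => a ∈ A ∧ b ∈ A).card := by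
    rw [Finset.filter_or, Finset.filter_and, Finset.card_union_add_card_inter]
  have e2 : (F.filter fun A => a ∈ A ∨ b ∈ A).card +
      (F.filter fun A => a ∉ A ∧ b ∉ A).card = F.card := by
    rw [← Finset.card_filter_add_card_filter_not (s := F) (fun A => a ∈ A ∨ b ∈ A)]
    simp only [not_or]
  by_cases hh : 2 * (F.filter fun A => a ∈ A).card > F.card
  · exact ⟨a, by simp, hh⟩
  · exact ⟨b, by simp, by omega⟩

/-- The case of height at most three, phrased with chains. -/
lemma chain_case {F : Finset (Finset ℕ)} {T : Finset ℕ} (hU : ∀ A ∈ F, ∀ B ∈ F, A ∪ B ∈ F)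
    (hne : ∀ A ∈ F, A.Nonempty) (hT : T ∈ F) (hsub : ∀ A ∈ F, A ⊆ T)
    (hch : ∀ A ∈ F, ∀ B ∈ F, ∀ C ∈ F, A ⊂ B → B ⊂ C → C ⊂ T → False)
    (hneg : ∀ x ∈ T, F.card ≤ 2 * (F.filter fun A => x ∉ A).card) : False := by
  -- no member lies in all members
  have s0 : ∀ P ∈ F, ∃ A ∈ F, ¬ P ⊆ A := by
    intro P hP
    by_contra! h
    obtain ⟨x, hx⟩ := hne P hP
    have h1 := hneg x (hsub P hP hx)
    have h2 : (F.filter fun A => x ∉ A) = ∅ := by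
      rw [Finset.filter_eq_empty_iff]
      intro A hA
      exact not_not.2 (h A hA hx)
    have : 0 < F.card := Finset.card_pos.2 ⟨P, hP⟩
    rw [h2, Finset.card_empty] at h1
    omega
  -- coatoms
  have s1 : ∀ M ∈ F, M ⊂ T → (∀ B ∈ F, M ⊂ B → ¬ B ⊂ T) →
      F.card ≤ 2 * (F.filter fun A => A ⊆ M).card := by
    intro M hM hMT hco
    obtain ⟨x, hxT, hxM⟩ := Finset.exists_of_ssubset hMT
    refine (hneg x hxT).trans (Nat.mul_le_mul_left _ (Finset.card_le_card ?_))
    intro A hA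
    simp only [Finset.mem_filter] at hA ⊢
    refine ⟨hA.1, ?_⟩
    by_contra hn
    refine hco (A ∪ M) (hU _ hA.1 _ hM) ?_ ?_
    · refine Finset.subset_union_right.ssubset_of_ne fun h => hn ?_
      rw [h]; exact Finset.subset_union_left
    · refine (hsub _ (hU _ hA.1 _ hM)).ssubset_of_ne fun h => ?_
      rw [← h] at hxT
      rcases Finset.mem_union.1 hxT with h | h
      · exact hA.2 h
      · exact hxM h
  have s2 : ∀ P ∈ F, (∀ B ∈ F, B ⊆ P → B = P) → ∀ x ∈ T, ∃ A ∈ F, A ≠ P ∧ x ∉ A := by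
    intro P hP hmin x hx
    by_contra! h
    have h1 : (F.filter fun A => x ∉ A) ⊆ {P} := by
      intro A hA
      simp only [Finset.mem_filter] at hA
      by_contra hn
      exact hA.2 (h A hA.1 (by simpa using hn))
    have h2 := Finset.card_le_card h1
    have h3 := hneg x hx
    rw [Finset.card_singleton] at h2
    obtain ⟨Q, hQ, hPQ⟩ := s0 P hP
    have hQP : Q ≠ P := by rintro rfl; exact hPQ subset_rfl
    have hQT : Q ≠ T := by rintro rfl; exact hPQ (hsub P hP)
    have hPT : P ≠ T := by
      rintro rfl; exact hQP (hmin Q hQ (hsub Q hQ))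
    have h4 : ({P, Q, T} : Finset (Finset ℕ)) ⊆ F := by
      intro A hA
      simp only [Finset.mem_insert, Finset.mem_singleton] at hA
      rcases hA with rfl | rfl | rfl <;> assumption
    have h5 := Finset.card_le_card h4
    rw [Finset.card_eq_three.2 ⟨P, Q, T, hQP.symm, hPT, hQT, rfl⟩] at h5
    omega
  have aux : ∀ P ∈ F, (∀ B ∈ F, B ⊆ P → B = P) → ∀ x ∈ T, x ∉ P →
      ∃ C ∈ F, P ⊂ C ∧ C ⊂ T ∧ x ∉ C := by
    intro P hP hmin x hx hxP
    obtain ⟨A, hA, hAP, hxA⟩ := s2 P hP hmin x hx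
    have hxC : x ∉ A ∪ P := by simp [hxA, hxP]
    refine ⟨A ∪ P, hU _ hA _ hP, ?_, ?_, hxC⟩
    · refine Finset.subset_union_right.ssubset_of_ne fun h => hAP (hmin A hA ?_)
      rw [h]; exact Finset.subset_union_left
    · refine (hsub _ (hU _ hA _ hP)).ssubset_of_ne fun h => hxC ?_
      rw [h]; exact hx
  have s3 : ∀ P ∈ F, (∀ B ∈ F, B ⊆ P → B = P) →
      ∃ C ∈ F, ∃ D ∈ F, P ⊂ C ∧ C ⊂ T ∧ P ⊂ D ∧ D ⊂ T ∧ C ≠ D := by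
    intro P hP hmin
    obtain ⟨A, hA, hPA⟩ := s0 P hP
    have hPT : P ⊂ T := (hsub P hP).ssubset_of_ne (by
      rintro rfl
      exact hPA (hmin A hA (hsub A hA)).ge)
    obtain ⟨x, hx, hxP⟩ := Finset.exists_of_ssubset hPT
    obtain ⟨C, hC, hPC, hCT, -⟩ := aux P hP hmin x hx hxP
    obtain ⟨y, hy, hyP⟩ := Finset.exists_of_ssubset hPC
    obtain ⟨D, hD, hPD, hDT, hyD⟩ := aux P hP hmin y (hCT.subset hy) hyP
    exact ⟨C, hC, D, hD, hPC, hCT, hPD, hDT, fun h => hyD (h ▸ hy)⟩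
  have exmin : ∀ A ∈ F, ∃ P ∈ F, P ⊆ A ∧ ∀ B ∈ F, B ⊆ P → B = P := by
    intro A hA
    obtain ⟨P, hPA, hP⟩ := F.exists_le_minimal hA
    exact ⟨P, hP.prop, hPA, fun B hB hBP => hP.eq_of_le hB hBP⟩
  obtain ⟨P, hP, -, hmin⟩ := exmin T hT
  obtain ⟨C, hC, D, hD, hPC, hCT, hPD, hDT, hCD⟩ := s3 P hP hmin
  have n1 := s1 C hC hCT fun B hB h1 h2 => hch P hP C hC B hB hPC h1 h2
  have n2 := s1 D hD hDT fun B hB h1 h2 => hch P hP D hD B hB hPD h1 h2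
  have int : ∀ A ∈ F, A ⊆ C → A ⊆ D → A = P := by
    intro A hA h1 h2
    by_contra hAP
    have hU' := hU A hA P hP
    have hlt : P ⊂ A ∪ P := by
      refine Finset.subset_union_right.ssubset_of_ne fun h => hAP (hmin A hA ?_)
      rw [h]; exact Finset.subset_union_left
    have e1 : A ∪ P = C := by
      by_contra hn
      exact hch P hP _ hU' C hC hlt
        ((Finset.union_subset h1 hPC.subset).ssubset_of_ne hn) hCT
    have e2 : A ∪ P = D := by
      by_contra hn
      exact hch P hP _ hU' D hD hlt
        ((Finset.union_subset h2 hPD.subset).ssubset_of_ne hn) hDT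
    exact hCD (e1.symm.trans e2)
  have c1 := Finset.card_union_add_card_inter (F.filter fun A => A ⊆ C) (F.filter fun A => A ⊆ D)
  have c2 : ((F.filter fun A => A ⊆ C) ∩ (F.filter fun A => A ⊆ D)).card ≤ 1 := by
    rw [← Finset.card_singleton P]
    refine Finset.card_le_card fun A hA => ?_
    simp only [Finset.mem_inter, Finset.mem_filter] at hA
    exact Finset.mem_singleton.2 (int A hA.1.1 hA.1.2 hA.2.2)
  have c3 : (F.filter fun A => A ⊆ C) ∪ (F.filter fun A => A ⊆ D) ⊆ F.erase T := by
    intro A hA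
    simp only [Finset.mem_union, Finset.mem_filter] at hA
    refine Finset.mem_erase.2 ⟨?_, by tauto⟩
    rintro rfl
    rcases hA with h | h
    · exact hCT.not_subset h.2
    · exact hDT.not_subset h.2
  have c4 := Finset.eq_of_subset_of_card_le c3 (by
    rw [Finset.card_erase_of_mem hT]; omega)
  have cov : ∀ A ∈ F, A ⊂ T → A ⊆ C ∨ A ⊆ D := by
    intro A hA hAT
    have : A ∈ F.erase T := Finset.mem_erase.2 ⟨hAT.ne, hA⟩
    rw [← c4] at this
    simp only [Finset.mem_union, Finset.mem_filter] at this
    tauto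
  obtain ⟨Q', hQ', hPQ⟩ := s0 P hP
  obtain ⟨Q, hQ, hQQ, hQmin⟩ := exmin Q' hQ'
  have hQP : Q ≠ P := by rintro rfl; exact hPQ hQQ
  obtain ⟨X, hX, Y, hY, hQX, hXT, hQY, hYT, hXY⟩ := s3 Q hQ hQmin
  have cov2 : ∀ X ∈ F, Q ⊂ X → X ⊂ T → X = C ∨ X = D := by
    intro X hX hQX hXT
    rcases cov X hX hXT with h | h
    · left
      by_contra hn
      exact hch Q hQ X hX C hC hQX (h.ssubset_of_ne hn) hCT
    · right
      by_contra hn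
      exact hch Q hQ X hX D hD hQX (h.ssubset_of_ne hn) hDT
  apply hQP
  rcases cov2 X hX hQX hXT with rfl | rfl <;> rcases cov2 Y hY hQY hYT with rfl | rfl
  · exact absurd rfl hXY
  · exact int Q hQ hQX.subset hQY.subset
  · exact int Q hQ hQY.subset hQX.subset
  · exact absurd rfl hXY

/-- If `H(F) ≤ 3` or `H(F) ≥ n − 1`, then some element of
`{1, …, n}` belongs to more than `m/2` of the sets of `F`. -/
theorem frankl_of_height_le_three_or_ge_pred (n m : ℕ) (F : Finset (Finset ℕ))
    (hF : IsUC F n m) (h : height F ≤ 3 ∨ n - 1 ≤ height F) :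
    ∃ x ∈ Finset.Icc 1 n, 2 * (F.filter fun A => x ∈ A).card > m := by
  obtain ⟨hFne, rfl, hne, hsup, hU⟩ := hF
  have hsub : ∀ A ∈ F, A ⊆ Finset.Icc 1 n := by
    intro A hA
    rw [← hsup]
    exact Finset.le_sup (f := id) hA
  have hT : Finset.Icc 1 n ∈ F := by
    rw [← hsup, ← Finset.sup'_eq_sup hFne]
    exact Finset.sup'_mem (F : Set (Finset ℕ)) (fun A hA B hB => hU A hA B hB) F hFne id
      (fun A hA => hA)
  have hcard : ∀ A ∈ F, A.card ≤ n := by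
    intro A hA
    simpa using Finset.card_le_card (hsub A hA)
  have hempty : ∀ k i, (∀ A ∈ F, k ≤ A.card) → n < k + i → rest F i = ∅ := by
    intro k i hk hi
    rw [Finset.eq_empty_iff_forall_notMem]
    intro A hA
    have h1 := rest_card hk i A hA
    have h2 := hcard A (rest_sub i A hA)
    omega
  rcases h with h | h
  · have h0 : rest F (height F) = ∅ :=
      Nat.sInf_mem (s := {H : ℕ | rest F H = ∅}) ⟨n + 1, hempty 0 (n + 1) (by simp) (by omega)⟩
    have h3 : rest F 3 = ∅ := Finset.subset_empty.1 (h0 ▸ rest_mono h)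
    by_contra! hn
    refine chain_case hU hne hT hsub ?_ ?_
    · intro A hA B hB C hC hAB hBC hCT
      have a0 : A ∈ rest F 0 := by simpa [rest] using hA
      have := rest_step (rest_step (rest_step a0 hB hAB) hC hBC) hT hCT
      simp [h3] at this
    · intro x hx
      have h1 := hn x hx
      have h2 := Finset.card_filter_add_card_filter_not (s := F) (fun A => x ∈ A)
      omega
  · by_cases hs : ∃ S ∈ F, S.card ≤ 2
    · obtain ⟨S, hS, hc⟩ := hs
      obtain ⟨x, hx, h'⟩ := small_case hU hne hS hc
      exact ⟨x, hsub S hS hx, h'⟩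
    · exfalso
      push Not at hs
      have h3 := hs _ hT
      simp only [Nat.card_Icc, Nat.add_sub_cancel] at h3
      have h4 : height F ≤ n - 2 := Nat.sInf_le (hempty 3 (n - 2) hs (by omega))
      omega
end

section
/- Let F be a union-closed family on n elements with m sets and suppose H(F) = 2. Then for every element x ∈ {1, …, n}, the number of sets A ∈ π₁ with x ∉ A is at most 1. -/
open Finset

/-- If `H(F) = 2`, then for every element `x ∈ {1, …, n}` the
number of sets of `π₁` not containing `x` is at most `1`. -/
theorem height_eq_two_missing_le_one (n m : ℕ) (F : Finset (Finset ℕ))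
    (hF : IsUC F n m) (h : height F = 2) :
    ∀ x ∈ Finset.Icc 1 n, ((layer F 1).filter fun A => x ∉ A).card ≤ 1 := by
  obtain ⟨-, -, -, hsup, hU⟩ := hF
  have h2 : rest F 2 = ∅ := by
    have hne : {H : ℕ | rest F H = ∅}.Nonempty := by
      by_contra hc
      rw [Set.not_nonempty_iff_eq_empty] at hc
      unfold height at h
      rw [hc, Nat.sInf_empty] at h
      omega
    have hm := Nat.sInf_mem hne
    unfold height at h
    rw [h] at hm
    exact hm
  -- a member strictly above another member survives the removal of a layer
  have step : ∀ (G : Finset (Finset ℕ)) (P Q : Finset ℕ), P ∈ G → Q ∈ G → P ≠ Q → P ⊆ Q →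
      Q ∈ G \ minimalSets G := by
    intro G P Q hP hQ hne hsub
    rw [Finset.mem_sdiff]
    refine ⟨hQ, fun hm => ?_⟩
    unfold minimalSets at hm
    exact (Finset.mem_filter.mp hm).2 P hP hne hsub
  intro x hx
  rw [Finset.card_le_one]
  intro A hA B hB
  obtain ⟨hA1, hxA⟩ := Finset.mem_filter.mp hA
  obtain ⟨hB1, hxB⟩ := Finset.mem_filter.mp hB
  have hA2 : A ∈ F := (Finset.mem_filter.mp hA1).1
  have hB2 : B ∈ F := (Finset.mem_filter.mp hB1).1
  by_contra hAB
  rw [← hsup, Finset.mem_sup] at hx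
  obtain ⟨C, hC, hxC⟩ := hx
  have hxC' : x ∈ C := hxC
  have hxAB : x ∉ A ∪ B := by simp [hxA, hxB]
  have hxD : x ∈ A ∪ B ∪ C := Finset.mem_union_right _ hxC'
  have hneA : A ≠ A ∪ B := by
    intro he
    have hBA : B ⊆ A := by rw [he]; exact Finset.subset_union_right
    exact (Finset.mem_filter.mp hA1).2 B hB2 (Ne.symm hAB) hBA
  have hUAB := hU A hA2 B hB2
  have hD := hU _ hUAB C hC
  have e1 : A ∪ B ∈ rest F 1 := step F A _ hA2 hUAB hneA Finset.subset_union_left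
  have hneD : A ∪ B ≠ A ∪ B ∪ C := by
    intro he
    rw [← he] at hxD
    exact hxAB hxD
  have e2 : A ∪ B ∪ C ∈ rest F 1 := step F _ _ hUAB hD hneD Finset.subset_union_left
  have e3 : A ∪ B ∪ C ∈ rest F 2 := step (rest F 1) _ _ e1 e2 hneD Finset.subset_union_left
  rw [h2] at e3
  simp at e3
end

section
/- Let F be a union-closed family on n elements with m sets and suppose H(F) = 2. Then the number of sets in π₁ satisfies 1 ≤ |π₁| ≤ n. -/
open Finset

/-- If `H(F) = 2`, then `1 ≤ |π₁| ≤ n`. -/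
theorem height_eq_two_card_layer_one (n m : ℕ) (F : Finset (Finset ℕ))
    (hF : IsUC F n m) (h : height F = 2) :
    1 ≤ (layer F 1).card ∧ (layer F 1).card ≤ n := by
  obtain ⟨hne, -, hpos, hsup, hun⟩ := hF
  have hr2 : rest F 2 = ∅ := by
    have hs : ({H : ℕ | rest F H = ∅}).Nonempty := by
      by_contra hcon
      rw [Set.not_nonempty_iff_eq_empty] at hcon
      simp [height, hcon] at h
    have := Nat.sInf_mem hs
    unfold height at h
    rw [h] at this
    exact this
  have hl : layer F 1 = minimalSets F := rfl
  have hr1 : rest F 1 = F \ minimalSets F := rfl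
  have hr2' : rest F 2 = rest F 1 \ minimalSets (rest F 1) := rfl
  rw [hl]
  have hmin : ∀ A, A ∈ minimalSets F ↔ A ∈ F ∧ ∀ B ∈ F, B ≠ A → ¬ B ⊆ A := by
    intro A; simp [minimalSets]
  have hsub : ∀ A ∈ F, A ⊆ Finset.Icc 1 n := by
    intro A hA
    rw [← hsup]
    exact Finset.le_sup (f := id) hA
  have hnemin : (minimalSets F).Nonempty := by
    by_contra hcon
    rw [Finset.not_nonempty_iff_eq_empty] at hcon
    rw [hcon, Finset.sdiff_empty] at hr1
    rw [hr2', hr1, hcon, Finset.sdiff_empty] at hr2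
    exact hne.ne_empty hr2
  have h1 : 1 ≤ (minimalSets F).card := Finset.card_pos.mpr hnemin
  refine ⟨h1, ?_⟩
  -- any two distinct minimal sets cover everything
  have hcover : ∀ A ∈ minimalSets F, ∀ B ∈ minimalSets F, A ≠ B →
      ∀ x ∈ Finset.Icc 1 n, x ∈ A ∪ B := by
    intro A hA B hB hAB x hx
    by_contra hxn
    have hA' := (hmin A).1 hA
    have hB' := (hmin B).1 hB
    rw [← hsup, Finset.mem_sup] at hx
    obtain ⟨C, hC, hxC⟩ := hx
    have hD : A ∪ B ∈ F := hun A hA'.1 B hB'.1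
    have hE : (A ∪ B) ∪ C ∈ F := hun _ hD C hC
    have hxE : x ∈ (A ∪ B) ∪ C := Finset.mem_union_right _ hxC
    have hD1 : A ∪ B ∈ rest F 1 := by
      rw [hr1, Finset.mem_sdiff]
      refine ⟨hD, fun hm => ?_⟩
      have hm' := ((hmin _).1 hm).2 A hA'.1
      by_cases he : A = A ∪ B
      · exact hA'.2 B hB'.1 (Ne.symm hAB) (he ▸ Finset.subset_union_right)
      · exact hm' he Finset.subset_union_left
    have hE1 : (A ∪ B) ∪ C ∈ rest F 1 := by
      rw [hr1, Finset.mem_sdiff]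
      refine ⟨hE, fun hm => ?_⟩
      refine ((hmin _).1 hm).2 (A ∪ B) hD (fun he => ?_) Finset.subset_union_left
      exact hxn (by rw [he]; exact hxE)
    have hE2 : (A ∪ B) ∪ C ∈ rest F 2 := by
      rw [hr2', Finset.mem_sdiff]
      refine ⟨hE1, fun hm => ?_⟩
      refine (Finset.mem_filter.1 hm).2 (A ∪ B) hD1 (fun he => ?_) Finset.subset_union_left
      exact hxn (by rw [he]; exact hxE)
    rw [hr2] at hE2
    exact Finset.notMem_empty _ hE2
  by_cases hc : (minimalSets F).card ≤ 1
  · obtain ⟨A, hA⟩ := hne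
    obtain ⟨x, hx⟩ := hpos A hA
    have := Finset.mem_Icc.1 (hsub A hA hx)
    omega
  · have hex : ∀ A ∈ minimalSets F, ∃ x ∈ Finset.Icc 1 n, x ∉ A := by
      intro A hA
      obtain ⟨B, hB, hBA⟩ := Finset.exists_mem_ne (not_le.1 hc) A
      by_contra! hcon
      have hB' := ((hmin B).1 hB).1
      exact ((hmin A).1 hA).2 B hB' hBA (fun y hy => hcon y (hsub B hB' hy))
    choose! f hf hfn using hex
    have hcard : (minimalSets F).card ≤ (Finset.Icc 1 n).card := by
      refine Finset.card_le_card_of_injOn f (fun A hA => hf A hA) ?_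
      intro A hA B hB hfe
      by_contra hAB
      rcases Finset.mem_union.1 (hcover A hA B hB hAB (f A) (hf A hA)) with h' | h'
      · exact hfn A hA h'
      · rw [hfe] at h'
        exact hfn B hB h'
    simpa using hcard
end

section
/- Let F be a union-closed family on n elements with m sets and suppose H(F) = 2. Then every element x ∈ {1, …, n} belongs to at least m − 1 of the sets of F, and there exists an element x ∈ {1, …, n} that belongs to more than m/2 of the sets of F. -/
open Finset

theorem mem_minimalSets_iff (G : Finset (Finset ℕ)) (A : Finset ℕ) :
    A ∈ minimalSets G ↔ A ∈ G ∧ ∀ B ∈ G, B ≠ A → ¬ B ⊆ A := by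
  rw [minimalSets, mem_filter]

theorem no_three_chain (F : Finset (Finset ℕ)) (h2 : rest F 2 = ∅) {A B C : Finset ℕ}
    (hA : A ∈ F) (hB : B ∈ F) (hC : C ∈ F) (hAB : A ⊆ B) (hBC : B ⊆ C)
    (nAB : A ≠ B) (nBC : B ≠ C) : False := by
  have nAC : A ≠ C := by
    rintro rfl
    exact nAB (hAB.antisymm hBC)
  have b1 : B ∈ rest F 1 := by
    simp only [rest, mem_sdiff, mem_minimalSets_iff]
    exact ⟨hB, fun k => k.2 A hA nAB hAB⟩
  have c1 : C ∈ rest F 1 := by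
    simp only [rest, mem_sdiff, mem_minimalSets_iff]
    exact ⟨hC, fun k => k.2 A hA nAC (hAB.trans hBC)⟩
  have c2 : C ∈ rest F 2 := by
    change C ∈ rest F 1 \ minimalSets (rest F 1)
    rw [mem_sdiff]
    refine ⟨c1, fun k => ?_⟩
    rw [minimalSets, mem_filter] at k
    exact k.2 B b1 nBC hBC
  rw [h2] at c2
  exact absurd c2 (notMem_empty _)

/-- If `H(F) = 2`, then every element of `{1, …, n}` belongs to at
least `m − 1` of the sets of `F`, and some element of `{1, …, n}` belongs to
more than `m/2` of the sets of `F`. -/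
theorem height_eq_two_frequencies (n m : ℕ) (F : Finset (Finset ℕ))
    (hF : IsUC F n m) (h : height F = 2) :
    (∀ x ∈ Finset.Icc 1 n, m - 1 ≤ (F.filter fun A => x ∈ A).card) ∧
      ∃ x ∈ Finset.Icc 1 n, 2 * (F.filter fun A => x ∈ A).card > m := by
  obtain ⟨hne, hm, hnon, hsup, huc⟩ := hF
  have h2 : rest F 2 = ∅ := by
    have hs : {H : ℕ | rest F H = ∅}.Nonempty := by
      by_contra hc
      rw [Set.not_nonempty_iff_eq_empty] at hc
      simp [height, hc] at h
    have := Nat.sInf_mem hs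
    change rest F (height F) = ∅ at this
    rwa [h] at this
  have h1 : rest F 1 ≠ ∅ := by
    intro hc
    have : height F ≤ 1 := Nat.sInf_le hc
    omega
  have hsub : ∀ A ∈ F, A ⊆ Finset.Icc 1 n := by
    intro A hA
    rw [← hsup]
    exact Finset.le_sup (f := id) hA
  have hU : Finset.Icc 1 n ∈ F := by
    have hcl : SupClosed (F : Set (Finset ℕ)) := by
      intro A hA B hB
      exact huc A hA B hB
    have := hcl.finsetSup'_mem hne (f := id) (fun A hA => hA)
    rwa [Finset.sup'_eq_sup, hsup] at this
  have key : ∀ x ∈ Finset.Icc 1 n, m - 1 ≤ (F.filter fun A => x ∈ A).card := by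
    intro x hx
    have hle : (F.filter fun A => ¬ x ∈ A).card ≤ 1 := by
      rw [Finset.card_le_one]
      intro A hA B hB
      rw [mem_filter] at hA hB
      by_contra hAB
      have hx' : x ∉ A ∪ B := by simp [hA.2, hB.2]
      have hAU : A ∪ B ≠ Finset.Icc 1 n := fun e => hx' (e ▸ hx)
      have hmem := huc A hA.1 B hB.1
      by_cases e : A = A ∪ B
      · have e' : B ≠ A ∪ B := fun k => hAB (e.trans k.symm)
        exact no_three_chain F h2 hB.1 hmem hU subset_union_right (hsub _ hmem) e' hAU
      · exact no_three_chain F h2 hA.1 hmem hU subset_union_left (hsub _ hmem) e hAU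
    have := Finset.card_filter_add_card_filter_not (s := F) (fun A => x ∈ A)
    omega
  refine ⟨key, ?_⟩
  obtain ⟨C, hC⟩ := Finset.nonempty_iff_ne_empty.mpr h1
  simp only [rest, mem_sdiff, mem_minimalSets_iff, not_and, not_forall, not_not] at hC
  obtain ⟨hCF, hC⟩ := hC
  obtain ⟨B, hB, hBC, hBs⟩ := hC hCF
  obtain ⟨x, hx⟩ := hnon B hB
  have hxU := hsub B hB hx
  refine ⟨x, hxU, ?_⟩
  have hk := key x hxU
  have h2' : 1 < (F.filter fun A => x ∈ A).card := by
    rw [Finset.one_lt_card]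
    exact ⟨B, mem_filter.mpr ⟨hB, hx⟩, C, mem_filter.mpr ⟨hCF, hBs hx⟩, hBC⟩
  omega
end

section
/- Let F be a union-closed family on n elements with m sets, and let A ∈ F have level i ≥ 2. Then the tent T(A) is itself a union-closed family (closed under unions of its members) and its height number equals 2; in particular, for any two distinct sets B, C ∈ T(A) \ {A} one has B ∪ C = A. -/
open Finset

theorem mem_minimalSets' {G : Finset (Finset ℕ)} {A : Finset ℕ} :
    A ∈ minimalSets G ↔ A ∈ G ∧ ∀ B ∈ G, B ≠ A → ¬ B ⊆ A := by
  simp [minimalSets]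

theorem rest_subset' (F : Finset (Finset ℕ)) (k : ℕ) : rest F k ⊆ F := by
  induction k with
  | zero => simp [rest]
  | succ k ih => exact fun x hx => ih (Finset.mem_sdiff.1 hx).1

theorem rest_up_s5 (F : Finset (Finset ℕ)) (k : ℕ) (X Y : Finset ℕ) (hX : X ∈ rest F k)
    (hXY : X ⊆ Y) (hY : Y ∈ F) : Y ∈ rest F k := by
  induction k with
  | zero => exact hY
  | succ k ih =>
    obtain ⟨h1, h2⟩ := Finset.mem_sdiff.1 hX
    refine Finset.mem_sdiff.2 ⟨ih h1, fun hm => ?_⟩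
    by_cases h : X = Y
    · exact h2 (h ▸ hm)
    · exact (mem_minimalSets'.1 hm).2 X h1 h hXY

theorem exists_minimal_below (G : Finset (Finset ℕ)) (A : Finset ℕ) (hA : A ∈ G) :
    ∃ B ∈ minimalSets G, B ⊆ A := by
  induction A using Finset.strongInduction with
  | H A ih =>
    by_cases h : A ∈ minimalSets G
    · exact ⟨A, h, subset_rfl⟩
    · rw [mem_minimalSets'] at h
      push Not at h
      obtain ⟨B, hB, hne, hs⟩ := h hA
      obtain ⟨C, hC, hCB⟩ := ih B (hs.ssubset_of_ne hne) hB
      exact ⟨C, hC, hCB.trans hs⟩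

/-- For `A ∈ F` of level `i ≥ 2`, the tent `T(A)` is union-closed
and has height number `2`; in particular any two distinct members of
`T(A) \ {A}` have union `A`. -/
theorem tent_is_uc_height_two (n m i : ℕ) (F : Finset (Finset ℕ)) (A : Finset ℕ)
    (hF : IsUC F n m) (hi : 2 ≤ i) (hA : A ∈ layer F i) :
    (∀ B ∈ tent F i A, ∀ C ∈ tent F i A, B ∪ C ∈ tent F i A) ∧
      height (tent F i A) = 2 ∧
      ∀ B ∈ (tent F i A).erase A, ∀ C ∈ (tent F i A).erase A,
        B ≠ C → B ∪ C = A := by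
  obtain ⟨k, rfl⟩ : ∃ k, i = k + 2 := ⟨i - 2, by omega⟩
  obtain ⟨hA1, hAmin⟩ := mem_minimalSets'.1 (show A ∈ minimalSets (rest F (k + 1)) from hA)
  obtain ⟨hAR, hAn⟩ := Finset.mem_sdiff.1 hA1
  have huc := hF.2.2.2.2
  have hmem : ∀ B, B ∈ tent F (k + 2) A ↔ B = A ∨ (B ∈ minimalSets (rest F k) ∧ B ⊆ A) := by
    intro B
    simp [tent, layer]
  have key : ∀ B ∈ minimalSets (rest F k), ∀ C ∈ minimalSets (rest F k), B ⊆ A → C ⊆ A →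
      B ≠ C → B ∪ C = A := by
    intro B hB C hC hBA hCA hne
    obtain ⟨hB1, hB2⟩ := mem_minimalSets'.1 hB
    obtain ⟨hC1, hC2⟩ := mem_minimalSets'.1 hC
    have hU : B ∪ C ∈ rest F k := rest_up_s5 F k B _ hB1 Finset.subset_union_left
      (huc _ (rest_subset' F k hB1) _ (rest_subset' F k hC1))
    have hU1 : B ∪ C ∈ rest F (k + 1) := by
      refine Finset.mem_sdiff.2 ⟨hU, fun hm => ?_⟩
      have h2 := (mem_minimalSets'.1 hm).2 B hB1
      by_cases hb : B = B ∪ C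
      · exact hB2 C hC1 hne.symm (Finset.union_eq_left.1 hb.symm)
      · exact h2 hb Finset.subset_union_left
    by_contra h
    exact hAmin _ hU1 h (Finset.union_subset hBA hCA)
  refine ⟨?_, ?_, ?_⟩
  · intro B hB C hC
    rw [hmem] at hB hC ⊢
    rcases hB with rfl | ⟨hB, hBA⟩
    · left
      rcases hC with rfl | ⟨hC, hCA⟩
      · simp
      · exact Finset.union_eq_left.2 hCA
    · rcases hC with rfl | ⟨hC, hCA⟩
      · exact Or.inl (Finset.union_eq_right.2 hBA)
      · by_cases h : B = C
        · subst h
          right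
          simpa using ⟨hB, hBA⟩
        · exact Or.inl (key B hB C hC hBA hCA h)
  · obtain ⟨B0, hB0, hB0A⟩ := exists_minimal_below _ A hAR
    have hB0ne : B0 ≠ A := fun h => hAn (h ▸ hB0)
    have hmin : ∀ B, B ∈ minimalSets (tent F (k + 2) A) ↔
        B ∈ minimalSets (rest F k) ∧ B ⊆ A := by
      intro B
      rw [mem_minimalSets', hmem]
      constructor
      · rintro ⟨rfl | h, h2⟩
        · exact absurd hB0A (h2 B0 ((hmem _).2 (Or.inr ⟨hB0, hB0A⟩)) hB0ne)
        · exact h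
      · rintro ⟨h1, h2⟩
        refine ⟨Or.inr ⟨h1, h2⟩, fun C hC hne hs => ?_⟩
        rcases (hmem C).1 hC with rfl | ⟨hC1, _⟩
        · exact hne (hs.antisymm h2)
        · exact (mem_minimalSets'.1 h1).2 C (mem_minimalSets'.1 hC1).1 hne hs
    have hr1 : rest (tent F (k + 2) A) 1 = {A} := by
      ext B
      simp only [rest, Finset.mem_sdiff, hmin, hmem, Finset.mem_singleton]
      constructor
      · tauto
      · rintro rfl
        exact ⟨Or.inl rfl, fun h => hAn h.1⟩
    have hr2 : rest (tent F (k + 2) A) 2 = ∅ := by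
      change rest (tent F (k + 2) A) 1 \ minimalSets (rest (tent F (k + 2) A) 1) = ∅
      rw [hr1, Finset.sdiff_eq_empty_iff_subset]
      intro B hB
      rw [mem_minimalSets']
      refine ⟨hB, fun C hC hne => ?_⟩
      rw [Finset.mem_singleton] at hB hC
      exact absurd (hC.trans hB.symm) hne
    have hr0 : rest (tent F (k + 2) A) 0 ≠ ∅ :=
      Finset.ne_empty_of_mem ((hmem A).2 (Or.inl rfl))
    unfold height
    apply le_antisymm
    · exact Nat.sInf_le hr2
    · refine le_csInf ⟨2, hr2⟩ fun H hH => ?_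
      by_contra hlt
      have : H = 0 ∨ H = 1 := by omega
      rcases this with rfl | rfl
      · exact hr0 hH
      · have hH' : rest (tent F (k + 2) A) 1 = ∅ := hH
        rw [hr1] at hH'
        exact Finset.singleton_ne_empty A hH'
  · intro B hB C hC hne
    obtain ⟨hBn, hB⟩ := Finset.mem_erase.1 hB
    obtain ⟨hCn, hC⟩ := Finset.mem_erase.1 hC
    obtain ⟨hB1, hB2⟩ := ((hmem B).1 hB).resolve_left hBn
    obtain ⟨hC1, hC2⟩ := ((hmem C).1 hC).resolve_left hCn
    exact key B hB1 C hC1 hB2 hC2 hne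
end
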